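/- Fix integers N ≥ 2 and k with 1 ≤ k ≤ N − 1, and for each integer m ≥ 1 define E_m = ∑_{j=1}^m min(j/k, 1) · C(m, j) · B(k + j, m − j + N − k) / B(k, N − k), where C(m, j) is the binomial coefficient and B is the Beta function. Then the sequence (E_m)_{m ≥ 1} is monotone nondecreasing in m. -/

import Mathlib

open MeasureTheory Finset

/-- The Beta function `B(x, y) = ∫₀¹ t^(x-1) (1-t)^(y-1) dt`. -/
noncomputable def Beta (x y : ℝ) : ℝ :=
  ∫ t in (0:ℝ)..1, t ^ (x - 1) * (1 - t) ^ (y - 1)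

/-- The expected value of the unnormalized Clipped Coverage (Lemma 1) when the synthetic
set has `m` samples. -/
noncomputable def expectedClippedCoverage (N k m : ℕ) : ℝ :=
  ∑ j ∈ Finset.Icc 1 m,
    min ((j : ℝ) / k) 1 * (m.choose j : ℝ) *
      Beta ((k : ℝ) + j) ((m : ℝ) - j + N - k) / Beta (k : ℝ) ((N : ℝ) - k)

/-!
`E_m` is the mean of `min (j / k) 1` over a beta-binomial number `j` of successes in `m` trials.
One further trial can only increase `j`, so the mean of any monotone function of `j` grows with
`m`. In formulas, Pascal's rule for the binomial coefficients is played against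
`B(x, y) = B(x + 1, y) + B(x, y + 1)`, which splits according to the outcome of the next trial.
-/

theorem monotone_sum_antidiagonal_choose_nsmul {M : Type*} [AddCommMonoid M] [PartialOrder M]
    [IsOrderedAddMonoid M] {f : ℕ → ℕ → M} (hf : ∀ i j, f i j ≤ f i (j + 1) + f (i + 1) j) :
    Monotone fun m ↦ ∑ ij ∈ antidiagonal m, m.choose ij.1 • f ij.1 ij.2 := by
  refine monotone_nat_of_le_succ fun m ↦ ?_
  calc ∑ ij ∈ antidiagonal m, m.choose ij.1 • f ij.1 ij.2
      ≤ ∑ ij ∈ antidiagonal m, m.choose ij.1 • (f ij.1 (ij.2 + 1) + f (ij.1 + 1) ij.2) :=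
        sum_le_sum fun ij _ ↦ nsmul_le_nsmul_right (hf ij.1 ij.2) _
    _ = ∑ ij ∈ antidiagonal m, m.choose ij.1 • f ij.1 (ij.2 + 1) +
          ∑ ij ∈ antidiagonal m, m.choose ij.2 • f (ij.1 + 1) ij.2 := by
        simp only [nsmul_add, sum_add_distrib]
        congr 1
        refine sum_congr rfl fun ij hij ↦ ?_
        rw [Nat.choose_symm_of_eq_add (mem_antidiagonal.1 hij).symm]
    _ = ∑ ij ∈ antidiagonal (m + 1), (m + 1).choose ij.1 • f ij.1 ij.2 :=
        (sum_antidiagonal_choose_succ_nsmul f m).symm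

section Beta

variable {x y : ℝ}

theorem ofReal_Beta (x y : ℝ) : (Beta x y : ℂ) = Complex.betaIntegral x y := by
  rw [Beta, Complex.betaIntegral, ← intervalIntegral.integral_ofReal]
  refine intervalIntegral.integral_congr fun t ht ↦ ?_
  rw [Set.uIcc_of_le zero_le_one] at ht
  simp only [Complex.ofReal_mul, Complex.ofReal_cpow ht.1,
    Complex.ofReal_cpow (sub_nonneg.2 ht.2), Complex.ofReal_sub, Complex.ofReal_one]

theorem Beta_eq_beta (hx : 0 < x) (hy : 0 < y) : Beta x y = ProbabilityTheory.beta x y := by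
  rw [ProbabilityTheory.beta_eq_betaIntegralReal x y hx hy, ← ofReal_Beta, Complex.ofReal_re]

theorem Beta_pos (hx : 0 < x) (hy : 0 < y) : 0 < Beta x y :=
  Beta_eq_beta hx hy ▸ ProbabilityTheory.beta_pos hx hy

theorem Beta_eq_Beta_add_Beta (hx : 0 < x) (hy : 0 < y) :
    Beta x y = Beta x (y + 1) + Beta (x + 1) y := by
  have hxy : 0 < x + y := add_pos hx hy
  have hΓ : Real.Gamma (x + y) ≠ 0 := (Real.Gamma_pos_of_pos hxy).ne'
  rw [Beta_eq_beta hx hy, Beta_eq_beta hx (by positivity), Beta_eq_beta (by positivity) hy]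
  simp only [ProbabilityTheory.beta, ← add_assoc, add_right_comm x 1 y,
    Real.Gamma_add_one hx.ne', Real.Gamma_add_one hy.ne', Real.Gamma_add_one hxy.ne']
  field_simp
  ring

end Beta

/-- The mean of `w` under the beta-binomial distribution with `m` trials and shape parameters
`x` and `y`. The sum runs over the pairs (number of successes, number of failures). -/
noncomputable def betaBinomialMean (w : ℕ → ℝ) (x y : ℝ) (m : ℕ) : ℝ :=
  (∑ ij ∈ antidiagonal m, m.choose ij.1 • (w ij.1 * Beta (x + ij.1) (y + ij.2))) / Beta x y

theorem monotone_betaBinomialMean {w : ℕ → ℝ} (hw : Monotone w) {x y : ℝ} (hx : 0 < x)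
    (hy : 0 < y) : Monotone (betaBinomialMean w x y) := by
  refine Monotone.div_const (monotone_sum_antidiagonal_choose_nsmul
    (f := fun i j ↦ w i * Beta (x + i) (y + j)) fun i j ↦ ?_) (Beta_pos hx hy).le
  have hB : 0 ≤ Beta (x + i + 1) (y + j) := (Beta_pos (by positivity) (by positivity)).le
  calc w i * Beta (x + i) (y + j)
      = w i * Beta (x + i) (y + j + 1) + w i * Beta (x + i + 1) (y + j) := by
        rw [Beta_eq_Beta_add_Beta (by positivity) (by positivity), mul_add]
    _ ≤ w i * Beta (x + i) (y + j + 1) + w (i + 1) * Beta (x + i + 1) (y + j) := by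
        gcongr
        exact hw i.le_succ
    _ = w i * Beta (x + i) (y + (j + 1 : ℕ)) + w (i + 1) * Beta (x + (i + 1 : ℕ)) (y + j) := by
        simp only [Nat.cast_add_one, add_assoc]

theorem expectedClippedCoverage_eq_betaBinomialMean (N k m : ℕ) :
    expectedClippedCoverage N k m =
      betaBinomialMean (fun j ↦ min ((j : ℝ) / k) 1) k (N - k) m := by
  rw [expectedClippedCoverage, betaBinomialMean, ← sum_div,
    Nat.sum_antidiagonal_eq_sum_range_succ_mk, range_eq_Ico,
    sum_eq_sum_Ico_succ_bot m.succ_pos]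
  simp only [Nat.cast_zero, zero_div, zero_le_one, min_eq_left, zero_mul, smul_zero, zero_add]
  congr 1
  refine sum_congr rfl fun j hj ↦ ?_
  have hjm : j ≤ m := (mem_Icc.1 hj).2
  have hfailures : (m : ℝ) - j + N - k = N - k + (m - j : ℕ) := by
    rw [Nat.cast_sub hjm]
    ring
  rw [hfailures, nsmul_eq_mul]
  ring

/-- The expected unnormalized Clipped Coverage `E_m` of Lemma 1 is monotone nondecreasing
in the number `m ≥ 1` of synthetic samples. -/
theorem expectedClippedCoverage_monotone
    (N k : ℕ) (hN : 2 ≤ N) (hk1 : 1 ≤ k) (hkN : k ≤ N - 1) :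
    ∀ m m' : ℕ, 1 ≤ m → m ≤ m' →
      expectedClippedCoverage N k m ≤ expectedClippedCoverage N k m' := by
  intro m m' _ hmm'
  have hk : (0 : ℝ) < k := Nat.cast_pos.2 hk1
  have hNk : (0 : ℝ) < N - k := sub_pos.2 (Nat.cast_lt.2 (by lia))
  have hclip : Monotone fun j : ℕ ↦ min ((j : ℝ) / k) 1 :=
    (Nat.mono_cast.div_const hk.le).min monotone_const
  simp only [expectedClippedCoverage_eq_betaBinomialMean]
  exact monotone_betaBinomialMean hclip hk hNk hmm'
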